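/- Theorem 1.3(ii): Let d ≥ 1 and let ε > γ_d. Then there exists a unique probability measure ν on ℤ^d satisfying the balance equation with parameter ε, i.e. there is exactly one ν : ℤ^d → [0,∞) with Σ_{x∈ℤ^d} ν_x = 1 such that (1 + ε ν_0) ν_x = (1/(2d)) Σ_{i=1}^d (ν_{x+e_i} + ν_{x−e_i}) for all x ∈ ℤ^d, x ≠ 0. -/

import Mathlib

open Finset

namespace CBRW

/-- The `i`-th canonical basis vector of `ℤ^d`. -/
def e (d : ℕ) (i : Fin d) : Fin d → ℤ := Pi.single i 1

/-- The step of the simple random walk corresponding to the direction `(i, b)`: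
`+e_i` if `b = true`, `-e_i` if `b = false`. -/
def dir (d : ℕ) (s : Fin d × Bool) : Fin d → ℤ := if s.2 then e d s.1 else -(e d s.1)

/-- The position at time `j` of the simple random walk started at `x` and driven by the
word of increments `w` (of length `k`); only the first `j` letters of `w` are used. -/
def posAt (d : ℕ) {k : ℕ} (x : Fin d → ℤ) (w : Fin k → Fin d × Bool) (j : ℕ) :
    Fin d → ℤ :=
  x + ∑ i : Fin k, if (i : ℕ) < j then dir d (w i) else 0

open Classical in
/-- `ℙ_x(τ_y = k)`: the probability that the simple random walk on `ℤ^d` started at `x`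
first visits `y` at time `k` (meaningful for `k ≥ 1`). -/
noncomputable def firstHitProb (d : ℕ) (x y : Fin d → ℤ) (k : ℕ) : ℝ :=
  ((Finset.univ.filter (fun w : Fin k → Fin d × Bool =>
      (∀ j, 1 ≤ j → j < k → posAt d x w j ≠ y) ∧ posAt d x w k = y)).card : ℝ) /
    (2 * (d : ℝ)) ^ k

open Classical in
/-- `ℙ_x(τ_y ≥ k + 1)`: the probability that the simple random walk on `ℤ^d` started at `x`
avoids `y` at all times `1, …, k`. -/
noncomputable def avoidProb (d : ℕ) (x y : Fin d → ℤ) (k : ℕ) : ℝ :=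
  ((Finset.univ.filter (fun w : Fin k → Fin d × Bool =>
      ∀ j, 1 ≤ j → j ≤ k → posAt d x w j ≠ y)).card : ℝ) / (2 * (d : ℝ)) ^ k

/-- `γ_d = ℙ_0(τ_0 = ∞)`: the probability that the simple random walk started at `0`
never returns to `0`. -/
noncomputable def gamma (d : ℕ) : ℝ := 1 - ∑' k : ℕ, firstHitProb d 0 0 (k + 1)

/-- `E_x[𝟙_{τ_y < ∞} (1 + u)^{-τ_y}]` for the simple random walk started at `x`. -/
noncomputable def hitGen (d : ℕ) (x y : Fin d → ℤ) (u : ℝ) : ℝ :=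
  ∑' k : ℕ, firstHitProb d x y (k + 1) * ((1 + u) ^ (k + 1))⁻¹

/-- `ν` satisfies the balance equation with parameter `ε`:
`(1 + ε ν 0) ν x = (1/(2d)) ∑ i (ν (x + e i) + ν (x - e i))` for all `x ≠ 0`. -/
def BalanceEq (d : ℕ) (ε : ℝ) (ν : (Fin d → ℤ) → ℝ) : Prop :=
  ∀ x : Fin d → ℤ, x ≠ 0 →
    (1 + ε * ν 0) * ν x =
      (1 / (2 * (d : ℝ))) * ∑ i : Fin d, (ν (x + e d i) + ν (x - e d i))

/-- `ν` is a probability measure on `ℤ^d`, identified with a nonnegative function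
summing to `1`. -/
def IsProbMeasure (d : ℕ) (ν : (Fin d → ℤ) → ℝ) : Prop :=
  (∀ x, 0 ≤ ν x) ∧ HasSum ν 1

end CBRW

/-!
For a uniform walk `x ↦ x + s i` on a group, let `h_r(x) = E_x[r ^ T]`, where `T ≥ 0` is the
hitting time of `0`, and let `A(r) = E_0[r ^ (τ_0 - 1)]`. For `l > 1` the function `h_{1/l}` is, up
to scaling, the only summable solution of `l f = P f` off `0`, where `P` averages over one step,
because `P` is an `ℓ¹` contraction. Since `P` preserves total mass, `h_{1/l}` has mass
`(l - A(1/l)) / (l - 1)`. Hence a probability measure `ν` solves the balance equation precisely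
when `ν = ν_0 h_{1/l}` with `l = 1 + ε ν_0` and `l - A(1/l) = ε`. The function `l - A(1/l)` is
continuous and strictly increasing on `[1, ∞)` from the escape probability to `∞`, so such an `l`
exists and is unique when `ε` exceeds the escape probability.
-/

namespace CBRW

open scoped BigOperators

section Average

variable {ι G : Type*} [Fintype ι] [AddGroup G]

/-- The one-step averaging operator of the random walk with increments uniform on the family `s`:
`stepAverage s f x = E_x[f(S_1)]`. -/
noncomputable def stepAverage (s : ι → G) : (G → ℝ) →ₗ[ℝ] (G → ℝ) where
  toFun f x := 𝔼 i, f (x + s i)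
  map_add' _ _ := funext fun _ => expect_add_distrib ..
  map_smul' c f := funext fun x => (smul_expect c univ fun i => f (x + s i)).symm

variable (s : ι → G)

lemma stepAverage_apply (f : G → ℝ) (x : G) : stepAverage s f x = 𝔼 i, f (x + s i) := rfl

lemma stepAverage_nonneg {f : G → ℝ} (hf : ∀ x, 0 ≤ f x) (x : G) : 0 ≤ stepAverage s f x :=
  expect_nonneg fun _ _ => hf _

lemma abs_stepAverage_le (f : G → ℝ) (x : G) :
    |stepAverage s f x| ≤ stepAverage s (fun y => |f y|) x :=
  abs_expect_le ..

lemma hasSum_expect {κ : Type*} {f : ι → κ → ℝ} {a : ι → ℝ} (h : ∀ i, HasSum (f i) (a i)) :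
    HasSum (fun k => 𝔼 i, f i k) (𝔼 i, a i) := by
  simpa only [Fintype.expect_eq_sum_div_card] using (hasSum_sum fun i _ => h i).div_const _

lemma hasSum_stepAverage_apply {κ : Type*} {f : κ → G → ℝ} {g : G → ℝ}
    (h : ∀ y, HasSum (fun k => f k y) (g y)) (x : G) :
    HasSum (fun k => stepAverage s (f k) x) (stepAverage s g x) :=
  hasSum_expect fun _ => h _

lemma hasSum_stepAverage [Nonempty ι] {f : G → ℝ} {S : ℝ} (hf : HasSum f S) :
    HasSum (stepAverage s f) S := by
  have h := hasSum_expect fun i => (Equiv.addRight (s i)).hasSum_iff.mpr hf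
  rwa [Fintype.expect_const] at h

variable {s} in
lemma eq_zero_of_stepAverage_eq_zero (hs : AddSubmonoid.closure (Set.range s) = ⊤) {f : G → ℝ}
    (hf : ∀ x, 0 ≤ f x) (hf₀ : f 0 = 0) (hP : ∀ x, f x = 0 → stepAverage s f x = 0) : f = 0 := by
  funext x
  have hx : x ∈ AddSubmonoid.closure (Set.range s) := hs ▸ AddSubmonoid.mem_top x
  induction hx using AddSubmonoid.closure_induction_right with
  | zero => exact hf₀
  | add_right x _ y hy hfx =>
    obtain ⟨i, rfl⟩ := hy
    exact (expect_eq_zero_iff_of_nonneg fun j _ => hf (x + s j)).1 (hP x hfx) i (mem_univ i)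

/-- `f` satisfies the eigenvalue equation `l f = E_·[f(S_1)]` at every point except possibly the
origin. The balance equation is the case `l = 1 + ε ν 0`. -/
def IsEigenOffZero (s : ι → G) (l : ℝ) (f : G → ℝ) : Prop :=
  ∀ x, x ≠ 0 → l * f x = stepAverage s f x

namespace IsEigenOffZero

variable {s} {l : ℝ} {f g : G → ℝ}

lemma const_smul (hf : IsEigenOffZero s l f) (c : ℝ) : IsEigenOffZero s l (c • f) := by
  intro x hx
  rw [map_smul, Pi.smul_apply, Pi.smul_apply, ← hf x hx, smul_eq_mul, smul_eq_mul,
    mul_left_comm]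

lemma sub (hf : IsEigenOffZero s l f) (hg : IsEigenOffZero s l g) :
    IsEigenOffZero s l (f - g) := by
  intro x hx
  rw [map_sub, Pi.sub_apply, Pi.sub_apply, mul_sub, hf x hx, hg x hx]

variable [Nonempty ι]

lemma mul_mass_sub_apply_zero (hf : IsEigenOffZero s l f) {S : ℝ} (hS : HasSum f S) :
    l * (S - f 0) = S - stepAverage s f 0 := by
  classical
  have heq : (fun x => l * if x = 0 then 0 else f x) =
      fun x => if x = 0 then 0 else stepAverage s f x := by
    funext x
    split_ifs with hx
    exacts [mul_zero l, hf x hx]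
  have hl := (hasSum_ite_sub_hasSum hS 0).mul_left l
  exact (heq ▸ hl).unique (hasSum_ite_sub_hasSum (hasSum_stepAverage s hS) 0)

/-- Summing `l |f| ≤ P |f|` over `G` gives `l ‖f‖₁ ≤ ‖f‖₁`. -/
lemma eq_zero_of_summable (hl : 1 < l) (hf : IsEigenOffZero s l f) (hsum : Summable f)
    (hf₀ : f 0 = 0) : f = 0 := by
  have habs (x : G) : l * |f x| ≤ stepAverage s (fun y => |f y|) x := by
    rcases eq_or_ne x 0 with rfl | hx
    · simpa [hf₀] using stepAverage_nonneg s (fun y => abs_nonneg (f y)) 0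
    · calc l * |f x| = |l * f x| := by rw [abs_mul, abs_of_pos (zero_lt_one.trans hl)]
        _ = |stepAverage s f x| := by rw [hf x hx]
        _ ≤ _ := abs_stepAverage_le s f x
  have hnorm : l * ∑' x, |f x| ≤ ∑' x, |f x| :=
    hasSum_le habs (hsum.abs.hasSum.mul_left l) (hasSum_stepAverage s hsum.abs.hasSum)
  funext x
  have hx : |f x| ≤ ∑' y, |f y| := hsum.abs.le_tsum x fun _ _ => abs_nonneg _
  exact abs_nonpos_iff.1 (by nlinarith)

lemma eq_of_summable (hl : 1 < l) (hf : IsEigenOffZero s l f) (hg : IsEigenOffZero s l g)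
    (hfsum : Summable f) (hgsum : Summable g) (h₀ : f 0 = g 0) : f = g :=
  sub_eq_zero.1 <| (hf.sub hg).eq_zero_of_summable hl (hfsum.sub hgsum) (sub_eq_zero.2 h₀)

lemma eq_zero_of_nonneg (hs : AddSubmonoid.closure (Set.range s) = ⊤) (hl : 1 ≤ l)
    (hf : IsEigenOffZero s l f) (hnonneg : ∀ x, 0 ≤ f x) (hsum : Summable f) (hf₀ : f 0 = 0) :
    f = 0 := by
  have hmass := hf.mul_mass_sub_apply_zero hsum.hasSum
  have hP₀ : stepAverage s f 0 = 0 := by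
    have := stepAverage_nonneg s hnonneg 0
    have : 0 ≤ (l - 1) * ∑' x, f x := mul_nonneg (sub_nonneg.2 hl) (tsum_nonneg hnonneg)
    rw [hf₀] at hmass
    linarith
  refine eq_zero_of_stepAverage_eq_zero hs hnonneg hf₀ fun x hfx => ?_
  rcases eq_or_ne x 0 with rfl | hx
  · exact hP₀
  · rw [← hf x hx, hfx, mul_zero]

lemma apply_zero_pos (hs : AddSubmonoid.closure (Set.range s) = ⊤) (hl : 1 ≤ l)
    (hf : IsEigenOffZero s l f) (hnonneg : ∀ x, 0 ≤ f x) (hsum : HasSum f 1) : 0 < f 0 := by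
  refine (hnonneg 0).lt_of_ne' fun hf₀ => ?_
  rw [hf.eq_zero_of_nonneg hs hl hnonneg hsum.summable hf₀] at hsum
  exact zero_ne_one (hasSum_zero.unique hsum)

end IsEigenOffZero

end Average

section FirstPassage

variable {ι G : Type*} [Fintype ι] [AddGroup G] [DecidableEq G]

/-- `firstPassageProb s k x` is the probability that the walk started at `x` visits `0` for the
first time at time `k`, where time `0` counts as a visit; defined by first-step decomposition. -/
noncomputable def firstPassageProb (s : ι → G) : ℕ → G → ℝ
  | 0 => Pi.single 0 1
  | k + 1 => Function.update (stepAverage s (firstPassageProb s k)) 0 0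

/-- `returnProb s k = ℙ_0(τ_0 = k + 1)`. -/
noncomputable def returnProb (s : ι → G) (k : ℕ) : ℝ := stepAverage s (firstPassageProb s k) 0

/-- `ℙ_0(τ_0 = ∞)`. -/
noncomputable def escapeProb (s : ι → G) : ℝ := 1 - ∑' k, returnProb s k

/-- The shifted generating function `A(r) = E_0[r ^ (τ_0 - 1); τ_0 < ∞]` of the return time. -/
noncomputable def returnSeries (s : ι → G) (r : ℝ) : ℝ := ∑' k, r ^ k * returnProb s k

/-- The generating function `E_x[r ^ T; T < ∞]` of the first time `T ≥ 0` at which the walk started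
at `x` is at `0`. -/
noncomputable def hittingSeries (s : ι → G) (r : ℝ) (x : G) : ℝ :=
  ∑' k, r ^ k * firstPassageProb s k x

/-- The value `l - A(1 / l)` of the balance parameter `ε` for which the stationary measure has
eigenvalue `l = 1 + ε ν 0`. -/
noncomputable def balanceParam (s : ι → G) (l : ℝ) : ℝ := l - returnSeries s l⁻¹

variable (s : ι → G)

lemma firstPassageProb_nonneg (k : ℕ) (x : G) : 0 ≤ firstPassageProb s k x := by
  induction k generalizing x with
  | zero => exact (Pi.single_nonneg.2 zero_le_one : (0 : G → ℝ) ≤ Pi.single 0 1) x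
  | succ k ih =>
    rw [firstPassageProb, Function.update_apply]
    split_ifs
    exacts [le_rfl, stepAverage_nonneg s ih x]

lemma firstPassageProb_zero_right {k : ℕ} (hk : k ≠ 0) : firstPassageProb s k 0 = 0 := by
  obtain ⟨k, rfl⟩ := Nat.exists_eq_succ_of_ne_zero hk
  exact Function.update_self ..

lemma firstPassageProb_zero_left {x : G} (hx : x ≠ 0) : firstPassageProb s 0 x = 0 :=
  Pi.single_eq_of_ne hx 1

lemma firstPassageProb_succ (k : ℕ) {x : G} (hx : x ≠ 0) :
    firstPassageProb s (k + 1) x = stepAverage s (firstPassageProb s k) x :=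
  Function.update_of_ne hx ..

lemma returnProb_nonneg (k : ℕ) : 0 ≤ returnProb s k :=
  stepAverage_nonneg s (firstPassageProb_nonneg s k) 0

lemma pow_mul_returnProb_le {r : ℝ} (hr : r ∈ Set.Icc 0 1) (k : ℕ) :
    r ^ k * returnProb s k ≤ returnProb s k :=
  mul_le_of_le_one_left (returnProb_nonneg s k) (pow_le_one₀ hr.1 hr.2)

lemma hittingSeries_zero (r : ℝ) : hittingSeries s r 0 = 1 := by
  rw [hittingSeries, tsum_eq_single 0 fun k hk => by
    rw [firstPassageProb_zero_right s hk, mul_zero]]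
  simp [firstPassageProb]

lemma hittingSeries_nonneg {r : ℝ} (hr : 0 ≤ r) (x : G) : 0 ≤ hittingSeries s r x :=
  tsum_nonneg fun k => mul_nonneg (pow_nonneg hr k) (firstPassageProb_nonneg s k x)

lemma balanceParam_one : balanceParam s 1 = escapeProb s := by
  simp [balanceParam, returnSeries, escapeProb]

variable [Nonempty ι]

/-- By translation invariance of counting measure, summing over the starting point gives
`ℙ_0(τ_0 > k)`. -/
lemma hasSum_firstPassageProb (k : ℕ) :
    HasSum (firstPassageProb s k) (1 - ∑ j ∈ range k, returnProb s j) := by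
  induction k with
  | zero => simpa [firstPassageProb] using hasSum_pi_single (0 : G) (1 : ℝ)
  | succ k ih =>
    have h := (hasSum_stepAverage s ih).update 0 0
    rwa [zero_sub, neg_add_eq_sub, sub_sub, ← returnProb, ← sum_range_succ] at h

lemma sum_range_returnProb_le_one (k : ℕ) : ∑ j ∈ range k, returnProb s j ≤ 1 :=
  sub_nonneg.1 <| (hasSum_firstPassageProb s k).nonneg (firstPassageProb_nonneg s k)

lemma summable_returnProb : Summable (returnProb s) :=
  summable_of_sum_range_le (returnProb_nonneg s) (sum_range_returnProb_le_one s)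

lemma escapeProb_nonneg : 0 ≤ escapeProb s :=
  sub_nonneg.2 <|
    Real.tsum_le_of_sum_range_le (returnProb_nonneg s) (sum_range_returnProb_le_one s)

lemma summable_pow_mul_returnProb {r : ℝ} (hr : r ∈ Set.Icc 0 1) :
    Summable fun k => r ^ k * returnProb s k :=
  .of_nonneg_of_le (fun k => mul_nonneg (pow_nonneg hr.1 k) (returnProb_nonneg s k))
    (pow_mul_returnProb_le s hr) (summable_returnProb s)

lemma monotoneOn_returnSeries : MonotoneOn (returnSeries s) (Set.Icc 0 1) :=
  fun _ hr _ ht hrt => (summable_pow_mul_returnProb s hr).tsum_le_tsum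
    (fun k => mul_le_mul_of_nonneg_right (pow_le_pow_left₀ hr.1 hrt k) (returnProb_nonneg s k))
    (summable_pow_mul_returnProb s ht)

lemma continuousOn_returnSeries : ContinuousOn (returnSeries s) (Set.Icc 0 1) := by
  refine continuousOn_tsum (fun k => by fun_prop) (summable_returnProb s) fun k r hr => ?_
  rw [Real.norm_of_nonneg (mul_nonneg (pow_nonneg hr.1 k) (returnProb_nonneg s k))]
  exact pow_mul_returnProb_le s hr k

lemma summable_prod_pow_mul_firstPassageProb {r : ℝ} (hr : r ∈ Set.Ico 0 1) :
    Summable fun p : ℕ × G => r ^ p.1 * firstPassageProb s p.1 p.2 := by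
  have hmass (k : ℕ) := (hasSum_firstPassageProb s k).mul_left (r ^ k)
  rw [summable_prod_of_nonneg fun p =>
    mul_nonneg (pow_nonneg hr.1 _) (firstPassageProb_nonneg s _ _)]
  refine ⟨fun k => (hmass k).summable, ?_⟩
  simp only [fun k => (hmass k).tsum_eq]
  refine .of_nonneg_of_le (fun k => mul_nonneg (pow_nonneg hr.1 k) ?_)
    (fun k => mul_le_of_le_one_right (pow_nonneg hr.1 k) ?_)
    (summable_geometric_of_lt_one hr.1 hr.2)
  · exact sub_nonneg.2 (sum_range_returnProb_le_one s k)
  · exact sub_le_self 1 (sum_nonneg fun j _ => returnProb_nonneg s j)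

lemma hasSum_hittingSeries_apply {r : ℝ} (hr : r ∈ Set.Ico 0 1) (x : G) :
    HasSum (fun k => r ^ k * firstPassageProb s k x) (hittingSeries s r x) :=
  ((summable_prod_pow_mul_firstPassageProb s hr).prod_symm.prod_factor x).hasSum

lemma summable_hittingSeries {r : ℝ} (hr : r ∈ Set.Ico 0 1) : Summable (hittingSeries s r) :=
  (summable_prod_pow_mul_firstPassageProb s hr).prod_symm.prod

lemma hasSum_stepAverage_hittingSeries {r : ℝ} (hr : r ∈ Set.Ico 0 1) (x : G) :
    HasSum (fun k => r ^ k * stepAverage s (firstPassageProb s k) x)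
      (stepAverage s (hittingSeries s r) x) := by
  have h := hasSum_stepAverage_apply s (f := fun k => r ^ k • firstPassageProb s k)
    (hasSum_hittingSeries_apply s hr) x
  simpa only [map_smul, Pi.smul_apply, smul_eq_mul] using h

lemma stepAverage_hittingSeries_zero {r : ℝ} (hr : r ∈ Set.Ico 0 1) :
    stepAverage s (hittingSeries s r) 0 = returnSeries s r :=
  (hasSum_stepAverage_hittingSeries s hr 0).tsum_eq.symm

lemma hittingSeries_eq_mul_stepAverage {r : ℝ} (hr : r ∈ Set.Ico 0 1) {x : G} (hx : x ≠ 0) :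
    hittingSeries s r x = r * stepAverage s (hittingSeries s r) x := by
  rw [hittingSeries, (hasSum_hittingSeries_apply s hr x).summable.tsum_eq_zero_add,
    firstPassageProb_zero_left s hx, mul_zero, zero_add,
    ← ((hasSum_stepAverage_hittingSeries s hr x).mul_left r).tsum_eq]
  exact tsum_congr fun k => by rw [firstPassageProb_succ s k hx, pow_succ', mul_assoc]

variable {l : ℝ}

lemma inv_mem_Ico_zero_one (hl : 1 < l) : l⁻¹ ∈ Set.Ico 0 1 :=
  ⟨inv_nonneg.2 (zero_le_one.trans hl.le), inv_lt_one_of_one_lt₀ hl⟩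

lemma inv_mem_Icc_zero_one (hl : 1 ≤ l) : l⁻¹ ∈ Set.Icc 0 1 :=
  ⟨inv_nonneg.2 (zero_le_one.trans hl), inv_le_one_of_one_le₀ hl⟩

lemma isEigenOffZero_hittingSeries (hl : 1 < l) : IsEigenOffZero s l (hittingSeries s l⁻¹) := by
  have hl₀ : l ≠ 0 := (zero_lt_one.trans hl).ne'
  intro x hx
  rw [hittingSeries_eq_mul_stepAverage s (inv_mem_Ico_zero_one hl) hx, mul_inv_cancel_left₀ hl₀]

lemma hasSum_hittingSeries (hl : 1 < l) :
    HasSum (hittingSeries s l⁻¹) (balanceParam s l / (l - 1)) := by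
  have hr := inv_mem_Ico_zero_one hl
  have hsum := (summable_hittingSeries s hr).hasSum
  have hmass := (isEigenOffZero_hittingSeries s hl).mul_mass_sub_apply_zero hsum
  rw [hittingSeries_zero, stepAverage_hittingSeries_zero s hr] at hmass
  convert hsum using 1
  rw [div_eq_iff (sub_pos.2 hl).ne', balanceParam]
  linarith

lemma strictMonoOn_balanceParam : StrictMonoOn (balanceParam s) (Set.Ici 1) := by
  intro l hl m hm hlm
  have hanti : m⁻¹ ≤ l⁻¹ := inv_anti₀ (zero_lt_one.trans_le hl) hlm.le
  have hle : returnSeries s m⁻¹ ≤ returnSeries s l⁻¹ :=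
    monotoneOn_returnSeries s (inv_mem_Icc_zero_one hm) (inv_mem_Icc_zero_one hl) hanti
  rw [balanceParam, balanceParam]
  linarith

lemma continuousOn_balanceParam : ContinuousOn (balanceParam s) (Set.Ici 1) :=
  continuousOn_id.sub <| (continuousOn_returnSeries s).comp
    (continuousOn_inv₀.mono fun _ hl => (zero_lt_one.trans_le hl).ne') fun _ => inv_mem_Icc_zero_one

lemma returnSeries_le_one {r : ℝ} (hr : r ∈ Set.Icc 0 1) : returnSeries s r ≤ 1 :=
  ((summable_pow_mul_returnProb s hr).tsum_le_tsum (pow_mul_returnProb_le s hr)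
    (summable_returnProb s)).trans (sub_nonneg.1 (escapeProb_nonneg s))

lemma sub_one_le_balanceParam (hl : 1 ≤ l) : l - 1 ≤ balanceParam s l :=
  sub_le_sub_left (returnSeries_le_one s (inv_mem_Icc_zero_one hl)) l

lemma balanceParam_pos (hl : 1 < l) : 0 < balanceParam s l :=
  (sub_pos.2 hl).trans_le (sub_one_le_balanceParam s hl.le)

lemma existsUnique_balanceParam_eq {ε : ℝ} (hε : escapeProb s < ε) :
    ∃! l, 1 < l ∧ balanceParam s l = ε := by
  have hε₀ : 0 < ε := (escapeProb_nonneg s).trans_lt hε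
  have hle : (1 : ℝ) ≤ 1 + ε := le_add_of_nonneg_right hε₀.le
  have hupper : ε ≤ balanceParam s (1 + ε) := by
    simpa only [add_sub_cancel_left] using sub_one_le_balanceParam s hle
  rw [← balanceParam_one s] at hε
  obtain ⟨l, ⟨hl, -⟩, rfl⟩ := intermediate_value_Ioc hle
    ((continuousOn_balanceParam s).mono Set.Icc_subset_Ici_self) ⟨hε, hupper⟩
  exact ⟨l, ⟨hl, rfl⟩, fun m ⟨hm, hml⟩ => (strictMonoOn_balanceParam s).injOn hm.le hl.le hml⟩

/-- The probability measure proportional to `x ↦ E_x[l ^ (-T)]`, for `l > 1`. -/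
noncomputable def stationaryMeasure (s : ι → G) (l : ℝ) : G → ℝ :=
  ((l - 1) / balanceParam s l) • hittingSeries s l⁻¹

lemma stationaryMeasure_nonneg (hl : 1 < l) (x : G) : 0 ≤ stationaryMeasure s l x :=
  mul_nonneg (div_nonneg (sub_pos.2 hl).le (balanceParam_pos s hl).le)
    (hittingSeries_nonneg s (inv_mem_Ico_zero_one hl).1 x)

lemma hasSum_stationaryMeasure (hl : 1 < l) : HasSum (stationaryMeasure s l) 1 := by
  have h := (hasSum_hittingSeries s hl).const_smul ((l - 1) / balanceParam s l)
  rwa [smul_eq_mul, div_mul_div_cancel₀ (balanceParam_pos s hl).ne',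
    div_self (sub_pos.2 hl).ne'] at h

lemma isEigenOffZero_stationaryMeasure (hl : 1 < l) :
    IsEigenOffZero s l (stationaryMeasure s l) :=
  (isEigenOffZero_hittingSeries s hl).const_smul _

lemma one_add_balanceParam_mul_stationaryMeasure_zero (hl : 1 < l) :
    1 + balanceParam s l * stationaryMeasure s l 0 = l := by
  rw [stationaryMeasure, Pi.smul_apply, hittingSeries_zero, smul_eq_mul, mul_one,
    mul_div_cancel₀ _ (balanceParam_pos s hl).ne', add_sub_cancel]

variable {s} in
lemma IsEigenOffZero.eq_stationaryMeasure {f : G → ℝ} (hf : IsEigenOffZero s l f) (hl : 1 < l)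
    (hsum : HasSum f 1) : f = stationaryMeasure s l := by
  have hh := summable_hittingSeries s (inv_mem_Ico_zero_one hl)
  have h₀ : f 0 = (f 0 • hittingSeries s l⁻¹) 0 := by
    rw [Pi.smul_apply, hittingSeries_zero, smul_eq_mul, mul_one]
  have hprop : f = f 0 • hittingSeries s l⁻¹ :=
    hf.eq_of_summable hl ((isEigenOffZero_hittingSeries s hl).const_smul (f 0)) hsum.summable
      (hh.const_smul (f 0)) h₀
  have hmass : HasSum (f 0 • hittingSeries s l⁻¹) (f 0 * (balanceParam s l / (l - 1))) :=
    (hasSum_hittingSeries s hl).mul_left (f 0)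
  rw [← hprop] at hmass
  have h₀ : f 0 = (l - 1) / balanceParam s l := by
    rw [← inv_div, eq_inv_of_mul_eq_one_left (hmass.unique hsum)]
  rwa [h₀] at hprop

variable {s} in
lemma IsEigenOffZero.balanceParam_eq {ε : ℝ} {f : G → ℝ}
    (hf : IsEigenOffZero s (1 + ε * f 0) f) (hl : 1 < 1 + ε * f 0) (hsum : HasSum f 1) :
    balanceParam s (1 + ε * f 0) = ε := by
  have h := one_add_balanceParam_mul_stationaryMeasure_zero s hl
  rw [← hf.eq_stationaryMeasure hl hsum] at h
  have hf₀ : f 0 ≠ 0 := fun h₀ => by simp [h₀] at hl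
  exact mul_right_cancel₀ hf₀ (add_left_cancel h)

end FirstPassage

section LatticeWalk

variable {d : ℕ}

lemma stepAverage_dir (f : (Fin d → ℤ) → ℝ) (x : Fin d → ℤ) :
    stepAverage (dir d) f x = 1 / (2 * (d : ℝ)) * ∑ i, (f (x + e d i) + f (x - e d i)) := by
  rw [stepAverage_apply, Fintype.expect_eq_sum_div_card, Fintype.sum_prod_type, div_eq_inv_mul]
  simp [dir, sub_eq_add_neg, mul_comm]

lemma balanceEq_iff {ε : ℝ} {ν : (Fin d → ℤ) → ℝ} :
    BalanceEq d ε ν ↔ IsEigenOffZero (dir d) (1 + ε * ν 0) ν := by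
  simp only [BalanceEq, IsEigenOffZero, stepAverage_dir]

lemma closure_range_dir : AddSubmonoid.closure (Set.range (dir d)) = ⊤ := by
  have hdir (i : Fin d) (b : Bool) : dir d (i, b) ∈ AddSubmonoid.closure (Set.range (dir d)) :=
    AddSubmonoid.subset_closure ⟨_, rfl⟩
  refine eq_top_iff.2 fun x _ => ?_
  rw [← univ_sum_single x]
  refine sum_mem fun i _ => ?_
  obtain ⟨n, hn | hn⟩ := (x i).eq_nat_or_neg
  · have h : Pi.single i (x i) = n • dir d (i, true) := by simp [hn, dir, e, ← Pi.single_smul]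
    exact h ▸ nsmul_mem (hdir i true) n
  · have h : Pi.single i (x i) = n • dir d (i, false) := by
      simp [hn, dir, e, ← Pi.single_smul, Pi.single_neg]
    exact h ▸ nsmul_mem (hdir i false) n

lemma posAt_zero {k : ℕ} (x : Fin d → ℤ) (w : Fin k → Fin d × Bool) : posAt d x w 0 = x := by
  simp [posAt]

lemma posAt_cons_succ {k : ℕ} (x : Fin d → ℤ) (a : Fin d × Bool) (w : Fin k → Fin d × Bool)
    (j : ℕ) : posAt d x (Fin.cons a w : Fin (k + 1) → _) (j + 1) = posAt d (x + dir d a) w j := by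
  simp [posAt, Fin.sum_univ_succ, add_assoc]

lemma expect_fin_cons {α M : Type*} [Fintype α] [AddCommMonoid M] [Module ℚ≥0 M] {k : ℕ}
    (f : (Fin (k + 1) → α) → M) :
    𝔼 w, f w = 𝔼 a, 𝔼 w, f (Fin.cons a w) := by
  rw [← expect_product', univ_product_univ]
  exact (Fintype.expect_equiv (Fin.consEquiv fun _ => α) _ _ fun _ => rfl).symm

open Classical in
lemma firstHitProb_eq_expect (x y : Fin d → ℤ) (k : ℕ) :
    firstHitProb d x y k = 𝔼 w : Fin k → Fin d × Bool,
      if (∀ j, 1 ≤ j → j < k → posAt d x w j ≠ y) ∧ posAt d x w k = y then (1 : ℝ) else 0 := by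
  have hcard : (Fintype.card (Fin k → Fin d × Bool) : ℝ) = (2 * d) ^ k := by simp [mul_comm]
  rw [firstHitProb, Fintype.expect_eq_sum_div_card, hcard, natCast_card_filter]

open Classical in
/-- The updated value turns the hitting time `τ_y ≥ 1` into one that counts a visit at time `0`. -/
lemma update_firstHitProb_eq_expect (x y : Fin d → ℤ) (k : ℕ) :
    Function.update (fun z => firstHitProb d z y k) y (if k = 0 then 1 else 0) x =
      𝔼 w : Fin k → Fin d × Bool,
        if (∀ j < k, posAt d x w j ≠ y) ∧ posAt d x w k = y then (1 : ℝ) else 0 := by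
  rcases eq_or_ne x y with rfl | hxy
  · rcases k with _ | k
    · simp [posAt_zero]
    · rw [Function.update_self, if_neg k.succ_ne_zero]
      refine (expect_eq_zero fun w _ => ?_).symm
      exact if_neg fun h => h.1 0 k.succ_pos (posAt_zero x w)
  · rw [Function.update_of_ne hxy, firstHitProb_eq_expect]
    refine expect_congr rfl fun w _ => ?_
    congr 1
    refine propext (and_congr_left' ⟨fun h j hj => ?_, fun h j _ => h j⟩)
    rcases j.eq_zero_or_pos with rfl | hpos
    · rwa [posAt_zero]
    · exact h j hpos hj

lemma firstHitProb_succ (x y : Fin d → ℤ) (k : ℕ) :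
    firstHitProb d x y (k + 1) = stepAverage (dir d)
      (Function.update (fun z => firstHitProb d z y k) y (if k = 0 then 1 else 0)) x := by
  rw [firstHitProb_eq_expect, expect_fin_cons, stepAverage_apply]
  refine expect_congr rfl fun a _ => ?_
  rw [update_firstHitProb_eq_expect]
  refine expect_congr rfl fun w _ => ?_
  rw [posAt_cons_succ]
  congr 1
  refine propext (and_congr_left' ⟨fun h j hj => ?_, fun h j hj hjk => ?_⟩)
  · simpa only [posAt_cons_succ] using h (j + 1) j.succ_pos (Nat.succ_lt_succ hj)
  · obtain ⟨i, rfl⟩ := Nat.exists_eq_succ_of_ne_zero (Nat.one_le_iff_ne_zero.1 hj)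
    simpa only [posAt_cons_succ] using h i (Nat.lt_of_succ_lt_succ hjk)

lemma firstPassageProb_dir (k : ℕ) :
    firstPassageProb (dir d) k =
      Function.update (fun x => firstHitProb d x 0 k) 0 (if k = 0 then 1 else 0) := by
  induction k with
  | zero =>
    funext x
    rw [update_firstHitProb_eq_expect]
    simp [firstPassageProb, posAt_zero, Pi.single_apply]
  | succ k ih =>
    rw [firstPassageProb, ih]
    simp only [firstHitProb_succ, k.succ_ne_zero, if_false]

lemma gamma_eq_escapeProb : gamma d = escapeProb (dir d) := by
  simp only [gamma, escapeProb, returnProb, firstPassageProb_dir, firstHitProb_succ]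

end LatticeWalk

end CBRW

open CBRW in
theorem existsUnique_balance_probability_measure_of_gamma_lt_general
    {ι G : Type*} [Fintype ι] [Nonempty ι] [AddGroup G] [DecidableEq G] {s : ι → G}
    (hs : AddSubmonoid.closure (Set.range s) = ⊤) {ε : ℝ} (hε : escapeProb s < ε) :
    ∃! ν : G → ℝ, ((∀ x, 0 ≤ ν x) ∧ HasSum ν 1) ∧ IsEigenOffZero s (1 + ε * ν 0) ν := by
  have hε₀ : 0 < ε := (escapeProb_nonneg s).trans_lt hε
  obtain ⟨l, ⟨hl, hlε⟩, hunique⟩ := existsUnique_balanceParam_eq s hε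
  refine ⟨stationaryMeasure s l,
    ⟨⟨stationaryMeasure_nonneg s hl, hasSum_stationaryMeasure s hl⟩, ?_⟩, ?_⟩
  · rw [← hlε, one_add_balanceParam_mul_stationaryMeasure_zero s hl]
    exact isEigenOffZero_stationaryMeasure s hl
  · rintro μ ⟨⟨hnonneg, hsum⟩, hμ⟩
    have hμ₀ : 0 < μ 0 := hμ.apply_zero_pos hs
      (le_add_of_nonneg_right (mul_nonneg hε₀.le (hnonneg 0))) hnonneg hsum
    have hl' : 1 < 1 + ε * μ 0 := lt_add_of_pos_right 1 (mul_pos hε₀ hμ₀)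
    exact (hμ.eq_stationaryMeasure hl' hsum).trans
      (congrArg (stationaryMeasure s) (hunique _ ⟨hl', hμ.balanceParam_eq hl' hsum⟩))

open CBRW in
/-- Theorem 1.3(ii): if `ε > γ_d`, there is a unique probability measure on `ℤ^d`
satisfying the balance equation with parameter `ε`. -/
theorem existsUnique_balance_probability_measure_of_gamma_lt
    (d : ℕ) (hd : 1 ≤ d) (ε : ℝ) (hεγ : gamma d < ε) :
    ∃! ν : (Fin d → ℤ) → ℝ, IsProbMeasure d ν ∧ BalanceEq d ε ν := by
  have : Nonempty (Fin d) := ⟨⟨0, hd⟩⟩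
  simpa only [IsProbMeasure, balanceEq_iff] using
    existsUnique_balance_probability_measure_of_gamma_lt_general closure_range_dir
      (gamma_eq_escapeProb ▸ hεγ)
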